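/- Let n, p ∈ ℕ with n ≥ 2 and p ≥ 2, and let A₁, A₂, …, A_p be n×n complex matrices having n−1 common columns or n−1 common rows (i.e. there exists an index k such that all columns with index ≠ k, or all rows with index ≠ k, coincide across the family). Assume moreover that the matrices have a common eigenvalue, i.e. there exists λ ∈ ℂ which is an eigenvalue of every A_i. Then the matrices stabilize a common line or a common hyperplane: there exists a ℂ-subspace W of ℂⁿ with dim W = 1 or dim W = n−1 such that A_i W ⊆ W for every i ∈ {1,…,p}. -/

import Mathlib

/-- `μ ∈ ℂ` is an eigenvalue of the matrix `A`, for the standard action on `ℂⁿ`. -/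
def HasEigen {n : ℕ} (A : Matrix (Fin n) (Fin n) ℂ) (μ : ℂ) : Prop :=
  ∃ v : Fin n → ℂ, v ≠ 0 ∧ A.mulVec v = μ • v

/-! Let `μ` be the common eigenvalue of endomorphisms `f i` of an `n`-dimensional space. If the
`f i` agree on a hyperplane `H`, then the maps `f i - μ` are singular and agree on `H`. Either they
kill a common nonzero vector of `H`, which spans a stable line, or they are injective on `H`; then
each range has dimension at most `n - 1` and contains the common image of `H`, so all ranges are
one and the same stable hyperplane. Matrices with `n - 1` common columns agree on a coordinate
hyperplane. Those with `n - 1` common rows agree modulo a coordinate line, so their dual maps agree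
on a hyperplane, and taking annihilators exchanges stable lines and stable hyperplanes. -/

open Module Module.End

lemma finrank_map_eq_of_disjoint_ker {R M M' : Type*} [Ring R] [AddCommGroup M] [Module R M]
    [AddCommGroup M'] [Module R M'] {g : M →ₗ[R] M'} {p : Submodule R M}
    (h : Disjoint p (LinearMap.ker g)) :
    finrank R (p.map g) = finrank R p := by
  have hinj : Function.Injective (g.domRestrict p) :=
    (LinearMap.disjoint_ker_iff_injOn.mp h).injective
  rw [← LinearMap.range_domRestrict, LinearMap.finrank_range_of_inj hinj]

section Invariant

variable {R M : Type*} [CommRing R] [AddCommGroup M] [Module R M] {f : End R M} {μ : R}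

lemma mem_invtSubmodule_of_le_eigenspace {W : Submodule R M} (h : W ≤ f.eigenspace μ) :
    W ∈ f.invtSubmodule := by
  intro w hw
  rw [Submodule.mem_comap, mem_eigenspace_iff.mp (h hw)]
  exact W.smul_mem μ hw

lemma mem_invtSubmodule_of_range_sub_smul_le {W : Submodule R M}
    (h : LinearMap.range (f - μ • 1) ≤ W) : W ∈ f.invtSubmodule := by
  intro w hw
  have hsub : f w - μ • w ∈ W := h ⟨w, rfl⟩
  exact (W.sub_mem_iff_left (W.smul_mem μ hw)).mp hsub

lemma dualCoannihilator_mem_invtSubmodule {Φ : Submodule R (Dual R M)}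
    (h : Φ ∈ invtSubmodule f.dualMap) : Φ.dualCoannihilator ∈ f.invtSubmodule := by
  intro x hx
  rw [Submodule.mem_comap, Submodule.mem_dualCoannihilator]
  exact fun φ hφ ↦ (Submodule.mem_dualCoannihilator x).mp hx _ (h hφ)

lemma hasEigenvalue_iff_not_injective_sub_smul :
    f.HasEigenvalue μ ↔ ¬ Function.Injective (f - μ • 1 : End R M) := by
  rw [hasEigenvalue_iff, eigenspace_def, ne_eq, LinearMap.ker_eq_bot]

end Invariant

section Endomorphisms

variable {ι K V : Type*} [Field K] [AddCommGroup V] [Module K V]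

/-- The endomorphisms `f i` stabilize a common line or a common hyperplane. The dimension of a
hyperplane is expressed by `+ 1` on the left so as to avoid truncated subtraction. -/
def StabilizesLineOrHyperplane (f : ι → End K V) : Prop :=
  ∃ W : Submodule K V, (finrank K W = 1 ∨ finrank K W + 1 = finrank K V) ∧
    ∀ i, W ∈ (f i).invtSubmodule

variable [FiniteDimensional K V]

lemma hasEigenvalue_dualMap_iff {f : End K V} {μ : K} :
    HasEigenvalue f.dualMap μ ↔ f.HasEigenvalue μ := by
  have hsub : f.dualMap - μ • (1 : End K (Dual K V)) = (f - μ • 1 : End K V).dualMap := by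
    ext φ x
    simp
  rw [hasEigenvalue_iff_not_injective_sub_smul, hasEigenvalue_iff_not_injective_sub_smul, hsub,
    LinearMap.dualMap_injective_iff, LinearMap.injective_iff_surjective]

lemma finrank_range_sub_smul_lt {f : End K V} {μ : K} (hμ : f.HasEigenvalue μ) :
    finrank K (LinearMap.range (f - μ • 1)) < finrank K V := by
  rw [hasEigenvalue_iff_not_injective_sub_smul, LinearMap.injective_iff_surjective,
    ← LinearMap.range_eq_top] at hμ
  exact Submodule.finrank_lt hμ

lemma eq_range_sub_smul_of_le {f : End K V} {μ : K} (hμ : f.HasEigenvalue μ)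
    {W : Submodule K V} (hW : finrank K V ≤ finrank K W + 1)
    (hle : W ≤ LinearMap.range (f - μ • 1)) : W = LinearMap.range (f - μ • 1) := by
  have hlt := finrank_range_sub_smul_lt hμ
  exact Submodule.eq_of_le_of_finrank_le hle (by omega)

theorem stabilizesLineOrHyperplane_of_eqOn [Nonempty ι] {f : ι → End K V} {μ : K}
    (hμ : ∀ i, (f i).HasEigenvalue μ) {H : Submodule K V} (hH : finrank K V ≤ finrank K H + 1)
    (hf : ∀ i j, Set.EqOn (f i) (f j) H) : StabilizesLineOrHyperplane f := by
  obtain ⟨i₀⟩ := ‹Nonempty ι›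
  by_cases hdisj : Disjoint H ((f i₀).eigenspace μ)
  · set W := H.map (f i₀ - μ • 1)
    have hWH : finrank K W = finrank K H :=
      finrank_map_eq_of_disjoint_ker (by rwa [eigenspace_def] at hdisj)
    have hW_le : ∀ i, W ≤ LinearMap.range (f i - μ • 1) := by
      rintro i _ ⟨x, hx, rfl⟩
      exact ⟨x, by simp [hf i i₀ hx]⟩
    have hW_eq : ∀ i, W = LinearMap.range (f i - μ • 1) := fun i ↦
      eq_range_sub_smul_of_le (hμ i) (by omega) (hW_le i)
    have hW_lt : finrank K W < finrank K V := hW_eq i₀ ▸ finrank_range_sub_smul_lt (hμ i₀)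
    exact ⟨W, Or.inr (by omega), fun i ↦ mem_invtSubmodule_of_range_sub_smul_le (hW_eq i).ge⟩
  · obtain ⟨v, hvH, hv, hv0⟩ : ∃ v ∈ H, v ∈ (f i₀).eigenspace μ ∧ v ≠ 0 := by
      simpa [Submodule.disjoint_def] using hdisj
    have hspan : ∀ i, K ∙ v ≤ (f i).eigenspace μ := fun i ↦ by
      rw [Submodule.span_singleton_le_iff_mem, mem_eigenspace_iff, hf i i₀ hvH,
        mem_eigenspace_iff.mp hv]
    exact ⟨K ∙ v, Or.inl (finrank_span_singleton hv0), fun i ↦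
      mem_invtSubmodule_of_le_eigenspace (hspan i)⟩

lemma StabilizesLineOrHyperplane.of_dualMap {f : ι → End K V}
    (h : StabilizesLineOrHyperplane fun i ↦ (f i).dualMap) : StabilizesLineOrHyperplane f := by
  obtain ⟨Φ, hdim, hΦ⟩ := h
  have hadd := Subspace.finrank_add_finrank_dualCoannihilator_eq Φ
  rw [Subspace.dual_finrank_eq] at hdim
  exact ⟨Φ.dualCoannihilator, by omega, fun i ↦ dualCoannihilator_mem_invtSubmodule (hΦ i)⟩

theorem stabilizesLineOrHyperplane_of_sub_mem [Nonempty ι] {f : ι → End K V} {μ : K}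
    (hμ : ∀ i, (f i).HasEigenvalue μ) {L : Submodule K V} (hL : finrank K L ≤ 1)
    (hf : ∀ i j x, f i x - f j x ∈ L) : StabilizesLineOrHyperplane f := by
  have hadd := Subspace.finrank_add_finrank_dualAnnihilator_eq L
  refine .of_dualMap (stabilizesLineOrHyperplane_of_eqOn (H := L.dualAnnihilator)
    (fun i ↦ hasEigenvalue_dualMap_iff.mpr (hμ i)) ?_ ?_)
  · rw [Subspace.dual_finrank_eq]
    omega
  · intro i j φ hφ
    ext x
    have hφx := (Submodule.mem_dualAnnihilator φ).mp hφ _ (hf i j x)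
    rwa [map_sub, sub_eq_zero] at hφx

end Endomorphisms

section Matrices

lemma mulVec_eq_mulVec_of_forall_col_eq {R m n : Type*} [NonUnitalNonAssocSemiring R] [Fintype n]
    {A B : Matrix m n R} {k : n} (h : ∀ l ≠ k, ∀ i, A i l = B i l) {x : n → R} (hx : x k = 0) :
    A.mulVec x = B.mulVec x := by
  ext i
  simp only [Matrix.mulVec, dotProduct]
  refine Finset.sum_congr rfl fun l _ ↦ ?_
  obtain rfl | hl := eq_or_ne l k
  · rw [hx, mul_zero, mul_zero]
  · rw [h l hl i]

lemma mulVec_sub_mulVec_mem_span_single {R m n : Type*} [Ring R] [DecidableEq m] [Fintype n]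
    {A B : Matrix m n R} {k : m} (h : ∀ l ≠ k, ∀ j, A l j = B l j) (x : n → R) :
    A.mulVec x - B.mulVec x ∈ Submodule.span R {Pi.single k (1 : R)} := by
  refine Submodule.mem_span_singleton.mpr ⟨(A.mulVec x - B.mulVec x) k, ?_⟩
  ext l
  obtain rfl | hl := eq_or_ne l k
  · simp
  · simp [hl, Matrix.mulVec, funext (h l hl)]

lemma finrank_ker_proj_add_one {K n : Type*} [Field K] [Finite n] (k : n) :
    finrank K (LinearMap.ker (LinearMap.proj k : (n → K) →ₗ[K] K)) + 1 = finrank K (n → K) := by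
  classical
  refine Dual.finrank_ker_add_one_of_ne_zero fun h ↦ ?_
  simpa using LinearMap.congr_fun h (Pi.single k 1)

theorem levelt_stmt8_general {ι K n : Type*} [Nonempty ι] [Field K] [Fintype n]
    (A : ι → Matrix n n K)
    (hcr : (∃ k, ∀ i j, ∀ l ≠ k, ∀ m, A i m l = A j m l) ∨
      (∃ k, ∀ i j, ∀ l ≠ k, ∀ m, A i l m = A j l m))
    (heig : ∃ μ, ∀ i, HasEigenvalue (A i).mulVecLin μ) :
    StabilizesLineOrHyperplane fun i ↦ (A i).mulVecLin := by
  classical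
  obtain ⟨μ, hμ⟩ := heig
  rcases hcr with ⟨k, hcol⟩ | ⟨k, hrow⟩
  · exact stabilizesLineOrHyperplane_of_eqOn hμ (finrank_ker_proj_add_one k).ge
      fun i j _ hx ↦ mulVec_eq_mulVec_of_forall_col_eq (hcol i j) hx
  · exact stabilizesLineOrHyperplane_of_sub_mem hμ (finrank_span_singleton (by simp)).le
      fun i j ↦ mulVec_sub_mulVec_mem_span_single (hrow i j)

lemma HasEigen.hasEigenvalue {n : ℕ} {A : Matrix (Fin n) (Fin n) ℂ} {μ : ℂ} (h : HasEigen A μ) :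
    HasEigenvalue A.mulVecLin μ := by
  obtain ⟨v, hv, hAv⟩ := h
  exact hasEigenvalue_of_hasEigenvector (hasEigenvector_iff.mpr ⟨mem_eigenspace_iff.mpr hAv, hv⟩)

end Matrices

/-- If `A₁,…,A_p` (`n, p ≥ 2`) have `n−1` common columns or `n−1` common
rows, and have a common eigenvalue, then they stabilize a common line or hyperplane. -/
theorem levelt_stmt8 (n p : ℕ) (hn : 2 ≤ n) (hp : 2 ≤ p)
    (A : Fin p → Matrix (Fin n) (Fin n) ℂ)
    (hcr : (∃ k : Fin n, ∀ i i' : Fin p, ∀ l : Fin n, l ≠ k → ∀ m : Fin n,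
              A i m l = A i' m l) ∨
           (∃ k : Fin n, ∀ i i' : Fin p, ∀ l : Fin n, l ≠ k → ∀ m : Fin n,
              A i l m = A i' l m))
    (heig : ∃ μ : ℂ, ∀ i, HasEigen (A i) μ) :
    ∃ W : Submodule ℂ (Fin n → ℂ),
      (Module.finrank ℂ W = 1 ∨ Module.finrank ℂ W = n - 1) ∧
      ∀ i, ∀ w ∈ W, (A i).mulVec w ∈ W := by
  have : Nonempty (Fin p) := ⟨⟨0, by omega⟩⟩
  obtain ⟨W, hW, hinv⟩ := levelt_stmt8_general A hcr (heig.imp fun _ h i ↦ (h i).hasEigenvalue)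
  rw [Module.finrank_fin_fun] at hW
  exact ⟨W, by omega, hinv⟩
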